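/- arXiv:1302.3454 — 2 statements merged into one kernel-verified Lean document; each statement's English description precedes it below -/
import Mathlib

section
/- Let b > 0 be real and set c_b := i(b+b⁻¹)/2. For every ε with 0 < ε < π·min(b,b⁻¹) and every z ∈ ℂ with |Im z| < (b+b⁻¹)/2, the integral ∫_ℝ e^{−2iz(t+iε)} / ( (t+iε)·sinh(b(t+iε))·sinh(b⁻¹(t+iε)) ) dt converges absolutely, its value is independent of the choice of ε, and the function e_b(z) := exp( (1/4)·∫_ℝ e^{−2iz(t+iε)} / ( (t+iε)·sinh(b(t+iε))·sinh(b⁻¹(t+iε)) ) dt ) is holomorphic and nowhere vanishing on the strip { z : |Im z| < (b+b⁻¹)/2 }. -/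
open MeasureTheory Complex Real Filter Topology

noncomputable section

/-- The special point `c_b = i(b+b⁻¹)/2`. -/
def cb (b : ℝ) : ℂ := Complex.I * ((b : ℂ) + (b : ℂ)⁻¹) / 2

/-- The integrand in the integral representation of the noncompact quantum dilogarithm,
with the contour `ℝ + iε` passing above the pole at `w = 0`. -/
def ebIntegrand (b ε : ℝ) (z : ℂ) (t : ℝ) : ℂ :=
  Complex.exp (-2 * Complex.I * z * ((t : ℂ) + Complex.I * (ε : ℂ))) /
    (((t : ℂ) + Complex.I * (ε : ℂ)) *
      Complex.sinh ((b : ℂ) * ((t : ℂ) + Complex.I * (ε : ℂ))) *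
      Complex.sinh ((b : ℂ)⁻¹ * ((t : ℂ) + Complex.I * (ε : ℂ))))

/-- The noncompact quantum dilogarithm defined with contour parameter `ε`. -/
def ebE (b ε : ℝ) (z : ℂ) : ℂ :=
  Complex.exp ((1 / 4 : ℂ) * ∫ t : ℝ, ebIntegrand b ε z t)

/-- The noncompact quantum dilogarithm `e_b` (canonical choice of contour parameter). -/
def eb (b : ℝ) (z : ℂ) : ℂ := ebE b (π * min b b⁻¹ / 2) z

/-!
For `0 < ω * Im w < π` one has `|sinh (ω w)| ≥ |Im sinh (ω w)| = cosh (ω Re w) sin (ω Im w)`, so on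
the open strip between the pole at `0` and the next pole above it the integrand is holomorphic and
decays like `exp (-(b + b⁻¹ - 2 |Im z|) |Re w|)`, uniformly for `Im w` in compact sets and `z` in
small balls. This bound gives absolute convergence, kills the vertical sides in Cauchy's theorem for
rectangles (whence independence of `ε`), and dominates the integrand locally uniformly in `z`
(whence holomorphy).
-/

section ParametricIntegral

variable {α 𝕜 E : Type*} [MeasurableSpace α] {μ : Measure α} [NormedAddCommGroup E]

lemma aestronglyMeasurable_deriv_of_eventually [NontriviallyNormedField 𝕜] [NormedSpace 𝕜 E]
    {F : 𝕜 → α → E} {z : 𝕜} (hF_meas : ∀ᶠ w in 𝓝 z, AEStronglyMeasurable (F w) μ)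
    (hF_diff : ∀ᵐ a ∂μ, DifferentiableAt 𝕜 (F · a) z) :
    AEStronglyMeasurable (fun a ↦ deriv (F · a) z) μ := by
  obtain ⟨w, hw, hw_meas⟩ : ∃ w : ℕ → 𝕜, Tendsto w atTop (𝓝[≠] z) ∧
      ∀ n, AEStronglyMeasurable (F (w n)) μ :=
    exists_seq_forall_of_frequently (hF_meas.filter_mono nhdsWithin_le_nhds).frequently
  refine aestronglyMeasurable_of_tendsto_ae atTop (f := fun n a ↦ slope (F · a) z (w n))
    (fun n ↦ ?_) ?_
  · simp only [slope, vsub_eq_sub]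
    exact ((hw_meas n).sub hF_meas.self_of_nhds).const_smul _
  · filter_upwards [hF_diff] with a ha
    exact (hasDerivAt_iff_tendsto_slope.1 ha.hasDerivAt).comp hw

/-- Cauchy's estimate on smaller balls turns the bound on `F` into a bound on its derivative. -/
lemma differentiableAt_integral_of_dominated [NormedSpace ℂ E] {F : ℂ → α → E} {z : ℂ}
    {s : Set ℂ} {bound : α → ℝ} (hs : s ∈ 𝓝 z)
    (hF_meas : ∀ᶠ w in 𝓝 z, AEStronglyMeasurable (F w) μ)
    (hF_diff : ∀ᵐ a ∂μ, DifferentiableOn ℂ (F · a) s)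
    (h_bound : ∀ᵐ a ∂μ, ∀ w ∈ s, ‖F w a‖ ≤ bound a) (bound_integrable : Integrable bound μ) :
    DifferentiableAt ℂ (fun w ↦ ∫ a, F w a ∂μ) z := by
  obtain ⟨r, hr, hrs⟩ : ∃ r > 0, Metric.ball z (r + r) ⊆ s := by
    obtain ⟨R, hR, hRs⟩ := Metric.mem_nhds_iff.1 hs
    exact ⟨R / 2, half_pos hR, by rwa [add_halves]⟩
  have closedBall_subset {w : ℂ} (hw : w ∈ Metric.ball z r) : Metric.closedBall w r ⊆ s :=
    (Metric.closedBall_subset_ball' (by linarith [Metric.mem_ball.1 hw])).trans hrs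
  have differentiableAt {a : α} (ha : DifferentiableOn ℂ (F · a) s) {w : ℂ}
      (hw : w ∈ Metric.ball z r) : DifferentiableAt ℂ (F · a) w :=
    ha.differentiableAt <|
      mem_of_superset (Metric.closedBall_mem_nhds w hr) (closedBall_subset hw)
  have hF_int : Integrable (F z) μ :=
    bound_integrable.mono' hF_meas.self_of_nhds (h_bound.mono fun a ha ↦ ha z (mem_of_mem_nhds hs))
  have deriv_meas : AEStronglyMeasurable (fun a ↦ deriv (F · a) z) μ :=
    aestronglyMeasurable_deriv_of_eventually hF_meas
      (hF_diff.mono fun a ha ↦ ha.differentiableAt hs)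
  have deriv_le : ∀ᵐ a ∂μ, ∀ w ∈ Metric.ball z r, ‖deriv (F · a) w‖ ≤ bound a / r := by
    filter_upwards [hF_diff, h_bound] with a ha ha_le w hw
    exact norm_deriv_le_of_forall_mem_sphere_norm_le hr
      ((ha.mono (closedBall_subset hw)).diffContOnCl_ball subset_rfl)
      fun u hu ↦ ha_le u (closedBall_subset hw (Metric.sphere_subset_closedBall hu))
  exact (hasDerivAt_integral_of_dominated_loc_of_deriv_le (Metric.ball_mem_nhds z hr) hF_meas
    hF_int deriv_meas deriv_le (bound_integrable.div_const r)
    (hF_diff.mono fun a ha w hw ↦ (differentiableAt ha hw).hasDerivAt)).2.differentiableAt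

end ParametricIntegral

section ContourShift

variable {E : Type*} [NormedAddCommGroup E] [NormedSpace ℂ E]

lemma integral_add_mul_I_eq_of_tendsto_zero {f : ℂ → E} {y₁ y₂ : ℝ} {g : ℝ → ℝ}
    (hf : DifferentiableOn ℂ f (im ⁻¹' Set.uIcc y₁ y₂))
    (hf₁ : Integrable fun x : ℝ ↦ f (x + y₁ * I)) (hf₂ : Integrable fun x : ℝ ↦ f (x + y₂ * I))
    (hfg : ∀ w : ℂ, w.im ∈ Set.uIcc y₁ y₂ → ‖f w‖ ≤ g w.re) (hg : Tendsto g (cocompact ℝ) (𝓝 0)) :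
    ∫ x : ℝ, f (x + y₁ * I) = ∫ x : ℝ, f (x + y₂ * I) := by
  have vertical_le (x : ℝ) : ‖∫ y in y₁..y₂, f (x + y * I)‖ ≤ g x * |y₂ - y₁| :=
    intervalIntegral.norm_integral_le_of_norm_le_const fun y hy ↦ by
      simpa using hfg (x + y * I) (by simpa using Set.uIoc_subset_uIcc hy)
  have tendsto_vertical : Tendsto (fun x : ℝ ↦ ∫ y in y₁..y₂, f (x + y * I)) (cocompact ℝ) (𝓝 0) :=
    squeeze_zero_norm vertical_le (by simpa using hg.mul_const |y₂ - y₁|)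
  have tendsto_right := tendsto_vertical.mono_left atTop_le_cocompact
  have tendsto_left :=
    (tendsto_vertical.mono_left atBot_le_cocompact).comp tendsto_neg_atTop_atBot
  have tendsto_horizontal {y : ℝ} (hy : Integrable fun x : ℝ ↦ f (x + y * I)) :=
    intervalIntegral_tendsto_integral hy tendsto_neg_atTop_atBot tendsto_id
  have boundary_eq_zero (T : ℝ) := integral_boundary_rect_eq_zero_of_differentiableOn f
    ⟨-T, y₁⟩ ⟨T, y₂⟩ (hf.mono fun w hw ↦ hw.2)
  have boundary_tendsto := (((tendsto_horizontal hf₁).sub (tendsto_horizontal hf₂)).add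
    (tendsto_right.const_smul I)).sub (tendsto_left.const_smul I)
  have boundary_limit := tendsto_nhds_unique
    (boundary_tendsto.congr boundary_eq_zero) tendsto_const_nhds
  simpa [sub_eq_zero] using boundary_limit

end ContourShift

section ExponentialDecay

variable {a : ℝ}

lemma integrable_exp_neg_mul_abs (ha : 0 < a) : Integrable fun t : ℝ ↦ Real.exp (-a * |t|) := by
  refine .of_integral_ne_zero ?_
  rw [integral_comp_abs (f := fun t ↦ Real.exp (-a * t)), integral_exp_mul_Ioi (neg_lt_zero.2 ha)]
  simp [ha.ne']

lemma tendsto_exp_neg_mul_abs_cocompact (ha : 0 < a) :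
    Tendsto (fun t : ℝ ↦ Real.exp (-a * |t|)) (cocompact ℝ) (𝓝 0) :=
  Real.tendsto_exp_atBot.comp
    (tendsto_norm_cocompact_atTop.const_mul_atTop_of_neg (neg_lt_zero.2 ha))

end ExponentialDecay

section Sinh

lemma sinh_im (w : ℂ) : (Complex.sinh w).im = Real.cosh w.re * Real.sin w.im := by
  conv_lhs => rw [← re_add_im w, Complex.sinh_add, Complex.sinh_mul_I, Complex.cosh_mul_I]
  simp [← ofReal_sinh, ← ofReal_cosh, ← ofReal_sin, ← ofReal_cos]

lemma exp_abs_div_two_le_cosh (x : ℝ) : Real.exp |x| / 2 ≤ Real.cosh x := by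
  rw [Real.cosh_eq]
  gcongr
  exact Real.exp_abs_le x

lemma exp_abs_re_div_two_mul_abs_sin_im_le_norm_sinh (w : ℂ) :
    Real.exp |w.re| / 2 * |Real.sin w.im| ≤ ‖Complex.sinh w‖ :=
  calc Real.exp |w.re| / 2 * |Real.sin w.im| ≤ Real.cosh w.re * |Real.sin w.im| := by
        gcongr
        exact exp_abs_div_two_le_cosh w.re
    _ = |(Complex.sinh w).im| := by rw [sinh_im, abs_mul, abs_of_pos (Real.cosh_pos _)]
    _ ≤ ‖Complex.sinh w‖ := abs_im_le_norm _

lemma exp_mul_abs_re_div_two_mul_sin_le_norm_sinh {ω : ℝ} (hω : 0 ≤ ω) (w : ℂ) :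
    Real.exp (ω * |w.re|) / 2 * Real.sin (ω * w.im) ≤ ‖Complex.sinh (ω * w)‖ := by
  have h := exp_abs_re_div_two_mul_abs_sin_im_le_norm_sinh (ω * w)
  rw [re_ofReal_mul, im_ofReal_mul, abs_mul, abs_of_nonneg hω] at h
  exact (mul_le_mul_of_nonneg_left (le_abs_self _) (by positivity)).trans h

end Sinh

/-- The integrand of Faddeev's integral with arbitrary real periods `ω₁`, `ω₂`, as a function of a
complex variable `w`; `ebIntegrand` is its restriction to a horizontal line for `ω₁ = b`,
`ω₂ = b⁻¹`. -/
def faddeevIntegrand (ω₁ ω₂ : ℝ) (z w : ℂ) : ℂ :=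
  Complex.exp (-2 * I * z * w) / (w * Complex.sinh (ω₁ * w) * Complex.sinh (ω₂ * w))

lemma ebIntegrand_eq_faddeevIntegrand (b ε : ℝ) (z : ℂ) :
    ebIntegrand b ε z = fun t : ℝ ↦ faddeevIntegrand b b⁻¹ z (t + ε * I) := by
  ext t
  simp only [ebIntegrand, faddeevIntegrand, ofReal_inv, mul_comm I]

lemma eb_eq_exp_integral_faddeevIntegrand (b : ℝ) :
    eb b = fun z ↦ Complex.exp ((1 / 4 : ℂ) *
      ∫ t : ℝ, faddeevIntegrand b b⁻¹ z (t + (π * min b b⁻¹ / 2 : ℝ) * I)) := by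
  ext z
  simp only [eb, ebE, ebIntegrand_eq_faddeevIntegrand]

/-- The heights `y` of the open strip `0 < Im w < π / max ω₁ ω₂` between the pole of
`faddeevIntegrand ω₁ ω₂ z` at the origin and the next one above it. -/
def faddeevHeights (ω₁ ω₂ : ℝ) : Set ℝ := Set.Ioo 0 (π * min ω₁⁻¹ ω₂⁻¹)

section FaddeevIntegrand

variable {ω₁ ω₂ : ℝ}

lemma sin_mul_pos_of_mem_faddeevHeights (hω₁ : 0 < ω₁) (hω₂ : 0 < ω₂) {y : ℝ}
    (hy : y ∈ faddeevHeights ω₁ ω₂) : 0 < Real.sin (ω₁ * y) ∧ 0 < Real.sin (ω₂ * y) := by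
  obtain ⟨hy₀, hy⟩ := hy
  rw [mul_min_of_nonneg _ _ pi_nonneg, lt_min_iff, ← div_eq_mul_inv, ← div_eq_mul_inv,
    lt_div_iff₀' hω₁, lt_div_iff₀' hω₂] at hy
  exact ⟨Real.sin_pos_of_pos_of_lt_pi (by positivity) hy.1,
    Real.sin_pos_of_pos_of_lt_pi (by positivity) hy.2⟩

lemma sinh_mul_ne_zero_of_sin_mul_im_pos {ω : ℝ} (hω : 0 ≤ ω) {w : ℂ}
    (hw : 0 < Real.sin (ω * w.im)) : Complex.sinh (ω * w) ≠ 0 :=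
  norm_pos_iff.1 <| (by positivity : 0 < Real.exp (ω * |w.re|) / 2 * Real.sin (ω * w.im)).trans_le
    (exp_mul_abs_re_div_two_mul_sin_le_norm_sinh hω w)

lemma differentiableOn_faddeevIntegrand (hω₁ : 0 < ω₁) (hω₂ : 0 < ω₂) (z : ℂ) :
    DifferentiableOn ℂ (faddeevIntegrand ω₁ ω₂ z) (im ⁻¹' faddeevHeights ω₁ ω₂) := by
  unfold faddeevIntegrand
  refine DifferentiableOn.div (by fun_prop) (by fun_prop) fun w hw ↦ ?_
  obtain ⟨hsin₁, hsin₂⟩ := sin_mul_pos_of_mem_faddeevHeights hω₁ hω₂ hw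
  have hw_ne : w ≠ 0 := by
    rintro rfl
    exact hw.1.false
  exact mul_ne_zero (mul_ne_zero hw_ne (sinh_mul_ne_zero_of_sin_mul_im_pos hω₁.le hsin₁))
    (sinh_mul_ne_zero_of_sin_mul_im_pos hω₂.le hsin₂)

lemma continuous_faddeevIntegrand_add_mul_I (hω₁ : 0 < ω₁) (hω₂ : 0 < ω₂) {ε : ℝ}
    (hε : ε ∈ faddeevHeights ω₁ ω₂) (z : ℂ) :
    Continuous fun t : ℝ ↦ faddeevIntegrand ω₁ ω₂ z (t + ε * I) :=
  (differentiableOn_faddeevIntegrand hω₁ hω₂ z).continuousOn.comp_continuous (by fun_prop)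
    fun t ↦ by simpa using hε

lemma differentiable_faddeevIntegrand_left (w : ℂ) :
    Differentiable ℂ fun z ↦ faddeevIntegrand ω₁ ω₂ z w := by
  unfold faddeevIntegrand
  fun_prop

lemma norm_exp_neg_two_I_mul_mul_le (z w : ℂ) :
    ‖Complex.exp (-2 * I * z * w)‖ ≤
      Real.exp (2 * z.re * w.im) * Real.exp (2 * |z.im| * |w.re|) := by
  have hre : (-2 * I * z * w).re = 2 * z.re * w.im + 2 * (z.im * w.re) := by
    simp only [mul_re, mul_im, neg_re, neg_im, re_ofNat, im_ofNat, I_re, I_im]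
    ring
  rw [Complex.norm_exp, ← Real.exp_add, hre, mul_assoc 2 |z.im|, ← abs_mul]
  gcongr
  exact le_abs_self _

lemma norm_faddeevIntegrand_le (hω₁ : 0 < ω₁) (hω₂ : 0 < ω₂) (z : ℂ) {w : ℂ}
    (hw : w.im ∈ faddeevHeights ω₁ ω₂) :
    ‖faddeevIntegrand ω₁ ω₂ z w‖ ≤
      4 * Real.exp (2 * z.re * w.im) / (w.im * Real.sin (ω₁ * w.im) * Real.sin (ω₂ * w.im)) *
        Real.exp (-(ω₁ + ω₂ - 2 * |z.im|) * |w.re|) := by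
  obtain ⟨hsin₁, hsin₂⟩ := sin_mul_pos_of_mem_faddeevHeights hω₁ hω₂ hw
  have him : 0 < w.im := hw.1
  have exp_split : Real.exp (-(ω₁ + ω₂ - 2 * |z.im|) * |w.re|) =
      Real.exp (2 * |z.im| * |w.re|) / (Real.exp (ω₁ * |w.re|) * Real.exp (ω₂ * |w.re|)) := by
    rw [← Real.exp_add, ← Real.exp_sub]
    ring_nf
  calc ‖faddeevIntegrand ω₁ ω₂ z w‖
      = ‖Complex.exp (-2 * I * z * w)‖ /
          (‖w‖ * ‖Complex.sinh (ω₁ * w)‖ * ‖Complex.sinh (ω₂ * w)‖) := by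
        rw [faddeevIntegrand, norm_div, norm_mul, norm_mul]
    _ ≤ Real.exp (2 * z.re * w.im) * Real.exp (2 * |z.im| * |w.re|) /
          (w.im * (Real.exp (ω₁ * |w.re|) / 2 * Real.sin (ω₁ * w.im)) *
            (Real.exp (ω₂ * |w.re|) / 2 * Real.sin (ω₂ * w.im))) := by
        gcongr
        · exact norm_exp_neg_two_I_mul_mul_le z w
        · exact im_le_norm w
        · exact exp_mul_abs_re_div_two_mul_sin_le_norm_sinh hω₁.le w
        · exact exp_mul_abs_re_div_two_mul_sin_le_norm_sinh hω₂.le w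
    _ = _ := by
        rw [exp_split]
        field_simp
        norm_num

lemma exists_forall_norm_faddeevIntegrand_le (hω₁ : 0 < ω₁) (hω₂ : 0 < ω₂) {K : Set ℝ}
    (hK : IsCompact K) (hKω : K ⊆ faddeevHeights ω₁ ω₂) (x s : ℝ) :
    ∃ C, ∀ z w : ℂ, z.re ≤ x → |z.im| ≤ s → w.im ∈ K →
      ‖faddeevIntegrand ω₁ ω₂ z w‖ ≤ C * Real.exp (-(ω₁ + ω₂ - 2 * s) * |w.re|) := by
  have constant_continuousOn : ContinuousOn (fun y ↦ 4 * Real.exp (2 * x * y) /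
      (y * Real.sin (ω₁ * y) * Real.sin (ω₂ * y))) K := by
    refine ContinuousOn.div (by fun_prop) (by fun_prop) fun y hy ↦ ?_
    obtain ⟨hsin₁, hsin₂⟩ := sin_mul_pos_of_mem_faddeevHeights hω₁ hω₂ (hKω hy)
    exact mul_ne_zero (mul_ne_zero (hKω hy).1.ne' hsin₁.ne') hsin₂.ne'
  obtain ⟨C, hC⟩ := hK.bddAbove_image constant_continuousOn
  refine ⟨C, fun z w hzx hzs hw ↦ (norm_faddeevIntegrand_le hω₁ hω₂ z (hKω hw)).trans ?_⟩
  obtain ⟨hsin₁, hsin₂⟩ := sin_mul_pos_of_mem_faddeevHeights hω₁ hω₂ (hKω hw)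
  have him : 0 < w.im := (hKω hw).1
  calc _ ≤ 4 * Real.exp (2 * x * w.im) / (w.im * Real.sin (ω₁ * w.im) * Real.sin (ω₂ * w.im)) *
        Real.exp (-(ω₁ + ω₂ - 2 * s) * |w.re|) := by gcongr
    _ ≤ C * Real.exp (-(ω₁ + ω₂ - 2 * s) * |w.re|) := by
        gcongr
        exact hC (Set.mem_image_of_mem _ hw)

theorem integrable_faddeevIntegrand (hω₁ : 0 < ω₁) (hω₂ : 0 < ω₂) {ε : ℝ}
    (hε : ε ∈ faddeevHeights ω₁ ω₂) {z : ℂ} (hz : |z.im| < (ω₁ + ω₂) / 2) :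
    Integrable fun t : ℝ ↦ faddeevIntegrand ω₁ ω₂ z (t + ε * I) := by
  obtain ⟨C, hC⟩ := exists_forall_norm_faddeevIntegrand_le hω₁ hω₂ isCompact_singleton
    (Set.singleton_subset_iff.2 hε) z.re |z.im|
  refine ((integrable_exp_neg_mul_abs (a := ω₁ + ω₂ - 2 * |z.im|) (by linarith)).const_mul C).mono'
    (continuous_faddeevIntegrand_add_mul_I hω₁ hω₂ hε z).aestronglyMeasurable
    (ae_of_all _ fun t ↦ ?_)
  simpa using hC z (t + ε * I) le_rfl le_rfl (by simp)

theorem integral_faddeevIntegrand_eq (hω₁ : 0 < ω₁) (hω₂ : 0 < ω₂) {ε ε' : ℝ}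
    (hε : ε ∈ faddeevHeights ω₁ ω₂) (hε' : ε' ∈ faddeevHeights ω₁ ω₂) {z : ℂ}
    (hz : |z.im| < (ω₁ + ω₂) / 2) :
    ∫ t : ℝ, faddeevIntegrand ω₁ ω₂ z (t + ε * I) =
      ∫ t : ℝ, faddeevIntegrand ω₁ ω₂ z (t + ε' * I) := by
  have uIcc_subset : Set.uIcc ε ε' ⊆ faddeevHeights ω₁ ω₂ := Set.ordConnected_Ioo.uIcc_subset hε hε'
  obtain ⟨C, hC⟩ := exists_forall_norm_faddeevIntegrand_le hω₁ hω₂ isCompact_uIcc uIcc_subset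
    z.re |z.im|
  have decay : Tendsto (fun t : ℝ ↦ Real.exp (-(ω₁ + ω₂ - 2 * |z.im|) * |t|)) (cocompact ℝ) (𝓝 0) :=
    tendsto_exp_neg_mul_abs_cocompact (by linarith)
  exact integral_add_mul_I_eq_of_tendsto_zero
    ((differentiableOn_faddeevIntegrand hω₁ hω₂ z).mono (Set.preimage_mono uIcc_subset))
    (integrable_faddeevIntegrand hω₁ hω₂ hε hz) (integrable_faddeevIntegrand hω₁ hω₂ hε' hz)
    (fun w hw ↦ hC z w le_rfl le_rfl hw)
    (by simpa only [mul_zero] using decay.const_mul C)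

theorem differentiableAt_integral_faddeevIntegrand (hω₁ : 0 < ω₁) (hω₂ : 0 < ω₂) {ε : ℝ}
    (hε : ε ∈ faddeevHeights ω₁ ω₂) {z : ℂ} (hz : |z.im| < (ω₁ + ω₂) / 2) :
    DifferentiableAt ℂ (fun z ↦ ∫ t : ℝ, faddeevIntegrand ω₁ ω₂ z (t + ε * I)) z := by
  obtain ⟨s, hzs, hs⟩ := exists_between hz
  obtain ⟨C, hC⟩ := exists_forall_norm_faddeevIntegrand_le hω₁ hω₂ isCompact_singleton
    (Set.singleton_subset_iff.2 hε) (z.re + 1) s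
  have near_z : ∀ᶠ u : ℂ in 𝓝 z, u.re < z.re + 1 ∧ |u.im| < s :=
    (continuous_re.continuousAt.eventually_lt_const (lt_add_one _)).and
      (continuous_im.abs.continuousAt.eventually_lt_const hzs)
  refine differentiableAt_integral_of_dominated near_z
    (.of_forall fun u ↦
      (continuous_faddeevIntegrand_add_mul_I hω₁ hω₂ hε u).aestronglyMeasurable)
    (ae_of_all _ fun t ↦ (differentiable_faddeevIntegrand_left _).differentiableOn)
    (ae_of_all _ fun t u hu ↦ ?_)
    ((integrable_exp_neg_mul_abs (a := ω₁ + ω₂ - 2 * s) (by linarith)).const_mul C)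
  simpa using hC u (t + ε * I) hu.1.le hu.2.le (by simp)

end FaddeevIntegrand

/-- absolute convergence of the defining integral, independence of the
contour parameter `ε`, and holomorphy and nonvanishing of `e_b` on the strip
`|Im z| < (b+b⁻¹)/2`. -/
theorem statement0 (b : ℝ) (hb : 0 < b) :
    (∀ ε : ℝ, 0 < ε → ε < π * min b b⁻¹ → ∀ z : ℂ, |z.im| < (b + b⁻¹) / 2 →
      Integrable (ebIntegrand b ε z)) ∧
    (∀ ε ε' : ℝ, 0 < ε → ε < π * min b b⁻¹ → 0 < ε' → ε' < π * min b b⁻¹ →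
      ∀ z : ℂ, |z.im| < (b + b⁻¹) / 2 →
        ∫ t : ℝ, ebIntegrand b ε z t = ∫ t : ℝ, ebIntegrand b ε' z t) ∧
    DifferentiableOn ℂ (eb b) {z : ℂ | |z.im| < (b + b⁻¹) / 2} ∧
    (∀ z : ℂ, |z.im| < (b + b⁻¹) / 2 → eb b z ≠ 0) := by
  have hb' : 0 < b⁻¹ := inv_pos.2 hb
  have heights_eq : faddeevHeights b b⁻¹ = Set.Ioo 0 (π * min b b⁻¹) := by
    rw [faddeevHeights, inv_inv, min_comm]
  have half_mem : π * min b b⁻¹ / 2 ∈ faddeevHeights b b⁻¹ := by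
    have : 0 < π * min b b⁻¹ := by positivity
    rw [heights_eq]
    exact ⟨half_pos this, half_lt_self this⟩
  simp only [eb_eq_exp_integral_faddeevIntegrand, ebIntegrand_eq_faddeevIntegrand]
  refine ⟨fun ε hε₀ hε z hz ↦ ?_, fun ε ε' hε₀ hε hε'₀ hε' z hz ↦ ?_, fun z hz ↦ ?_,
    fun z _ ↦ Complex.exp_ne_zero _⟩
  · exact integrable_faddeevIntegrand hb hb' (heights_eq ▸ ⟨hε₀, hε⟩) hz
  · exact integral_faddeevIntegrand_eq hb hb' (heights_eq ▸ ⟨hε₀, hε⟩)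
      (heights_eq ▸ ⟨hε'₀, hε'⟩) hz
  · exact ((differentiableAt_integral_faddeevIntegrand hb hb' half_mem hz).const_mul
      _).cexp.differentiableWithinAt

end
end

section
/- Let b > 0 be real. For every z ∈ ℂ with |Im z| < 1/(2b) one has e_b(z − ib/2) = (1 + e^{2πbz})·e_b(z + ib/2), where both sides are given directly by the integral representation of e_b (both arguments lie in the strip |Im z| < (b+b⁻¹)/2). -/
open MeasureTheory Complex Real Filter Topology

noncomputable section

/-!
For `w = (2 / b) (t + i ε)` the integrands of `e_b` at `z ∓ i b / 2` differ by `-(8 / b)` times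
`e^{aw} / ((e^w - 1) w)` with `a = 1 / 2 - i b z`, where `0 < re a < 1`. Differentiating
`J a = ∫ e^{aw} / ((e^w - 1) w) dw` in `a` removes the factor `1 / w`; the remaining integral, moved
to the line `im w = π`, is a Beta integral, which Euler's reflection formula evaluates to the
derivative of `-log (1 - e^{2πia})`. Thus `e^{J a} (1 - e^{2πia})` is constant along the vertical
line through `a`, and it tends to `1` as `im a → ∞`. Finally `1 - e^{2πia} = 1 + e^{2πbz}`.
-/

section ContourShift

variable {E : Type*} [NormedAddCommGroup E] [NormedSpace ℂ E]

lemma tendsto_verticalIntegral_cocompact {f : ℂ → E} {y₁ y₂ : ℝ} {g : ℝ → ℝ}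
    (hfg : ∀ x : ℝ, ∀ y ∈ Set.uIcc y₁ y₂, ‖f (x + y * I)‖ ≤ g x)
    (hg : Tendsto g (cocompact ℝ) (𝓝 0)) :
    Tendsto (fun x : ℝ => ∫ y in y₁..y₂, f (x + y * I)) (cocompact ℝ) (𝓝 0) := by
  refine squeeze_zero_norm (a := fun x => g x * |y₂ - y₁|) (fun x => ?_)
    (by simpa using hg.mul_const |y₂ - y₁|)
  exact intervalIntegral.norm_integral_le_of_norm_le_const fun y hy =>
    hfg x y (Set.uIoc_subset_uIcc hy)

theorem integral_horizontal_line_eq_of_norm_le [CompleteSpace E] {f : ℂ → E} {y₁ y₂ : ℝ}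
    {g : ℝ → ℝ} (hf : DifferentiableOn ℂ f (im ⁻¹' Set.uIcc y₁ y₂))
    (hfg : ∀ x : ℝ, ∀ y ∈ Set.uIcc y₁ y₂, ‖f (x + y * I)‖ ≤ g x)
    (hg : Tendsto g (cocompact ℝ) (𝓝 0))
    (h₁ : Integrable fun x : ℝ => f (x + y₁ * I)) (h₂ : Integrable fun x : ℝ => f (x + y₂ * I)) :
    ∫ x : ℝ, f (x + y₁ * I) = ∫ x : ℝ, f (x + y₂ * I) := by
  have boundary_eq_zero (T : ℝ) :
      (∫ x in (-T)..T, f (x + y₁ * I)) - (∫ x in (-T)..T, f (x + y₂ * I)) +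
        I • (∫ y in y₁..y₂, f (T + y * I)) - I • (∫ y in y₁..y₂, f ((-T : ℝ) + y * I)) = 0 := by
    have h := Complex.integral_boundary_rect_eq_zero_of_differentiableOn f
      ((-T : ℝ) + y₁ * I) (T + y₂ * I) (hf.mono fun w hw => by simpa using hw.2)
    simpa using h
  have horizontal {y : ℝ} (h : Integrable fun x : ℝ => f (x + y * I)) :
      Tendsto (fun T : ℝ => ∫ x in (-T)..T, f (x + y * I)) atTop (𝓝 (∫ x : ℝ, f (x + y * I))) :=
    intervalIntegral_tendsto_integral h tendsto_neg_atTop_atBot tendsto_id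
  have vertical := tendsto_verticalIntegral_cocompact hfg hg
  rw [cocompact_eq_atBot_atTop, tendsto_sup] at vertical
  have limit := (((horizontal h₁).sub (horizontal h₂)).add (vertical.2.const_smul I)).sub
    ((vertical.1.comp tendsto_neg_atTop_atBot).const_smul I)
  simp only [smul_zero, add_zero, sub_zero] at limit
  exact sub_eq_zero.1 (tendsto_nhds_unique (limit.congr boundary_eq_zero) tendsto_const_nhds)

end ContourShift

lemma integrable_of_norm_le_mul_exp {E : Type*} [NormedAddCommGroup E] {f : ℝ → E} {C p q : ℝ}
    (hf : AEStronglyMeasurable f) (hp : 0 < p) (hq : q < 0)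
    (hfp : ∀ t, ‖f t‖ ≤ C * rexp (p * t)) (hfq : ∀ t, ‖f t‖ ≤ C * rexp (q * t)) :
    Integrable f := by
  rw [← integrableOn_univ, ← Set.Iic_union_Ioi (a := (0 : ℝ)), integrableOn_union]
  exact ⟨((integrableOn_exp_mul_Iic hp 0).const_mul C).mono' hf.restrict (ae_of_all _ hfp),
    ((integrableOn_exp_mul_Ioi hq 0).const_mul C).mono' hf.restrict (ae_of_all _ hfq)⟩

section LogisticKernel

variable {α : ℝ}

lemma exp_mul_div_one_add_exp_le (α t : ℝ) : rexp (α * t) / (1 + rexp t) ≤ rexp (α * t) :=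
  div_le_self (Real.exp_nonneg _) (by linarith [Real.exp_pos t])

lemma exp_mul_div_one_add_exp_le_exp_sub_one_mul (α t : ℝ) :
    rexp (α * t) / (1 + rexp t) ≤ rexp ((α - 1) * t) := by
  rw [sub_one_mul, Real.exp_sub]
  gcongr
  linarith

lemma integrable_exp_mul_div_one_add_exp (h₀ : 0 < α) (h₁ : α < 1) :
    Integrable fun t : ℝ => rexp (α * t) / (1 + rexp t) := by
  have norm_eq (t : ℝ) : ‖rexp (α * t) / (1 + rexp t)‖ = rexp (α * t) / (1 + rexp t) :=
    Real.norm_of_nonneg (by positivity)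
  have meas : Measurable fun t : ℝ => rexp (α * t) / (1 + rexp t) := by fun_prop
  refine integrable_of_norm_le_mul_exp (C := 1) meas.aestronglyMeasurable h₀ (sub_neg.2 h₁)
    (fun t => ?_) (fun t => ?_)
  · rw [norm_eq, one_mul]
    exact exp_mul_div_one_add_exp_le α t
  · rw [norm_eq, one_mul]
    exact exp_mul_div_one_add_exp_le_exp_sub_one_mul α t

lemma tendsto_exp_mul_div_one_add_exp_cocompact (h₀ : 0 < α) (h₁ : α < 1) :
    Tendsto (fun t : ℝ => rexp (α * t) / (1 + rexp t)) (cocompact ℝ) (𝓝 0) := by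
  have nonneg (t : ℝ) : 0 ≤ rexp (α * t) / (1 + rexp t) := by positivity
  rw [cocompact_eq_atBot_atTop, tendsto_sup]
  constructor
  · exact squeeze_zero nonneg (exp_mul_div_one_add_exp_le α)
      (Real.tendsto_exp_atBot.comp (tendsto_id.const_mul_atBot h₀))
  · exact squeeze_zero nonneg (exp_mul_div_one_add_exp_le_exp_sub_one_mul α)
      (Real.tendsto_exp_atBot.comp (tendsto_id.const_mul_atTop_of_neg (sub_neg.2 h₁)))

end LogisticKernel

section BetaIntegral

lemma betaIntegral_eq_integral_sigmoid (u v : ℂ) :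
    betaIntegral u v = ∫ t : ℝ, (sigmoid t : ℂ) ^ u * (sigmoid (-t) : ℂ) ^ v := by
  rw [betaIntegral, intervalIntegral.integral_of_le zero_le_one, integral_Ioc_eq_integral_Ioo,
    ← Real.range_sigmoid, ← Set.image_univ,
    integral_image_eq_integral_abs_deriv_smul MeasurableSet.univ
      (fun t _ => (Real.hasDerivAt_sigmoid t).hasDerivWithinAt) Real.sigmoid_injective.injOn,
    setIntegral_univ]
  congr 1 with t
  have h₀ := Real.sigmoid_pos t
  have h₁ := Real.sigmoid_pos (-t)
  have hsub : (1 : ℂ) - sigmoid t = sigmoid (-t) := by rw [Real.sigmoid_neg]; push_cast; rfl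
  have hne₀ : (sigmoid t : ℂ) ≠ 0 := ofReal_ne_zero.2 h₀.ne'
  have hne₁ : (sigmoid (-t) : ℂ) ≠ 0 := ofReal_ne_zero.2 h₁.ne'
  rw [← Real.sigmoid_neg, abs_of_pos (mul_pos h₀ h₁), hsub, cpow_sub _ _ hne₀, cpow_sub _ _ hne₁,
    cpow_one, cpow_one, real_smul, ofReal_mul]
  field_simp

lemma sigmoid_cpow_mul_sigmoid_neg_cpow (a : ℂ) (t : ℝ) :
    (sigmoid t : ℂ) ^ a * (sigmoid (-t) : ℂ) ^ (1 - a) = cexp (a * t) / (1 + cexp t) := by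
  have hpos := Real.sigmoid_pos (-t)
  have hsplit : sigmoid t = rexp t * sigmoid (-t) := by
    rw [← Real.sigmoid_mul_rexp_neg, mul_left_comm, ← Real.exp_add, add_neg_cancel, Real.exp_zero,
      mul_one]
  have hexp : (rexp t : ℂ) ^ a = cexp (a * t) := by
    rw [cpow_def_of_ne_zero (ofReal_ne_zero.2 (Real.exp_ne_zero t)),
      ← ofReal_log (Real.exp_nonneg t), Real.log_exp, mul_comm]
  have hinv : (sigmoid (-t) : ℂ) = (1 + cexp t)⁻¹ := by simp [Real.sigmoid_def]
  rw [hsplit, ofReal_mul, mul_cpow_ofReal_nonneg (Real.exp_nonneg t) hpos.le, mul_assoc,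
    ← cpow_add _ _ (ofReal_ne_zero.2 hpos.ne'), add_sub_cancel, cpow_one, hexp, hinv,
    div_eq_mul_inv]

lemma integral_cexp_mul_div_one_add_cexp {a : ℂ} (h₀ : 0 < a.re) (h₁ : a.re < 1) :
    ∫ t : ℝ, cexp (a * t) / (1 + cexp t) = π / Complex.sin (π * a) := by
  have hbeta := Gamma_mul_Gamma_eq_betaIntegral (s := a) (t := 1 - a) h₀ (by simpa using h₁)
  rw [add_sub_cancel, Complex.Gamma_one, one_mul, Complex.Gamma_mul_Gamma_one_sub,
    betaIntegral_eq_integral_sigmoid] at hbeta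
  simpa only [sigmoid_cpow_mul_sigmoid_neg_cpow] using hbeta.symm

end BetaIntegral

section BernoulliKernel

lemma abs_sin_mul_cosh_le_norm_sinh (w : ℂ) :
    |Real.sin w.im| * Real.cosh w.re ≤ ‖Complex.sinh w‖ := by
  have him : (Complex.sinh w).im = Real.cosh w.re * Real.sin w.im := by
    simp only [Complex.sinh, div_ofNat_im, sub_im, exp_im, neg_re, neg_im, Real.sin_neg,
      Real.cosh_eq]
    ring
  calc |Real.sin w.im| * Real.cosh w.re = |(Complex.sinh w).im| := by
        rw [him, abs_mul, abs_of_pos (Real.cosh_pos _), mul_comm]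
    _ ≤ ‖Complex.sinh w‖ := abs_im_le_norm _

lemma cexp_sub_one_eq (w : ℂ) : cexp w - 1 = 2 * cexp (w / 2) * Complex.sinh (w / 2) := by
  have hsq : cexp w = cexp (w / 2) * cexp (w / 2) := by rw [← Complex.exp_add, add_halves]
  have hinv : cexp (w / 2) * cexp (-(w / 2)) = 1 := by
    rw [← Complex.exp_add, add_neg_cancel, Complex.exp_zero]
  rw [Complex.sinh, hsq]
  linear_combination hinv

lemma abs_sin_half_mul_one_add_exp_le_norm_cexp_sub_one (w : ℂ) :
    |Real.sin (w.im / 2)| * (1 + rexp w.re) ≤ ‖cexp w - 1‖ := by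
  have hsinh := abs_sin_mul_cosh_le_norm_sinh (w / 2)
  have hre : (w / 2).re = w.re / 2 := by simp
  have him : (w / 2).im = w.im / 2 := by simp
  have hcosh : 1 + rexp w.re = 2 * rexp (w.re / 2) * Real.cosh (w.re / 2) := by
    have hsq : rexp w.re = rexp (w.re / 2) * rexp (w.re / 2) := by rw [← Real.exp_add, add_halves]
    have hinv : rexp (w.re / 2) * rexp (-(w.re / 2)) = 1 := by
      rw [← Real.exp_add, add_neg_cancel, Real.exp_zero]
    rw [Real.cosh_eq, hsq]
    linear_combination -hinv
  rw [hre, him] at hsinh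
  calc |Real.sin (w.im / 2)| * (1 + rexp w.re)
      = 2 * rexp (w.re / 2) * (|Real.sin (w.im / 2)| * Real.cosh (w.re / 2)) := by
        rw [hcosh]; ring
    _ ≤ 2 * rexp (w.re / 2) * ‖Complex.sinh (w / 2)‖ := by gcongr
    _ = ‖cexp w - 1‖ := by
        rw [cexp_sub_one_eq, norm_mul, norm_mul, Complex.norm_exp, hre, Complex.norm_ofNat]

/-- `w * bernoulliKernel a w` is the generating function `w e^{aw} / (e^w - 1)` of the Bernoulli
polynomials. The `b`-shift of the integrand of `e_b` reduces to `bernoulliKernel a w / w`. -/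
def bernoulliKernel (a w : ℂ) : ℂ := cexp (a * w) / (cexp w - 1)

variable {a : ℂ} {y : ℝ}

lemma sin_half_pos (hy : y ∈ Set.Ioo 0 (2 * π)) : 0 < Real.sin (y / 2) :=
  Real.sin_pos_of_pos_of_lt_pi (by linarith [hy.1]) (by linarith [hy.2])

lemma cexp_sub_one_ne_zero {w : ℂ} (hw : w.im ∈ Set.Ioo 0 (2 * π)) : cexp w - 1 ≠ 0 := by
  have hsin := sin_half_pos hw
  refine norm_pos_iff.1 (lt_of_lt_of_le ?_ (abs_sin_half_mul_one_add_exp_le_norm_cexp_sub_one w))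
  positivity

lemma differentiableOn_bernoulliKernel (a : ℂ) :
    DifferentiableOn ℂ (bernoulliKernel a) (im ⁻¹' Set.Ioo 0 (2 * π)) :=
  DifferentiableOn.div (by fun_prop) (by fun_prop) fun _ hw => cexp_sub_one_ne_zero hw

lemma norm_cexp_mul_add_mul_I (a : ℂ) (t y : ℝ) :
    ‖cexp (a * (t + y * I))‖ = rexp (-(a.im * y)) * rexp (a.re * t) := by
  have hre : (a * (t + y * I)).re = -(a.im * y) + a.re * t := by
    simp [mul_re, neg_add_eq_sub]
  rw [Complex.norm_exp, hre, Real.exp_add]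

lemma norm_bernoulliKernel_le (a : ℂ) (hy : y ∈ Set.Ioo 0 (2 * π)) (t : ℝ) :
    ‖bernoulliKernel a (t + y * I)‖ ≤
      rexp (-(a.im * y)) / Real.sin (y / 2) * (rexp (a.re * t) / (1 + rexp t)) := by
  have hsin := sin_half_pos hy
  have hden : Real.sin (y / 2) * (1 + rexp t) ≤ ‖cexp (t + y * I) - 1‖ := by
    simpa [abs_of_pos hsin] using
      abs_sin_half_mul_one_add_exp_le_norm_cexp_sub_one (t + y * I)
  rw [bernoulliKernel, norm_div, norm_cexp_mul_add_mul_I, div_mul_div_comm]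
  gcongr

lemma aestronglyMeasurable_bernoulliKernel (a : ℂ) (y : ℝ) :
    AEStronglyMeasurable fun t : ℝ => bernoulliKernel a (t + y * I) := by
  have meas : Measurable fun t : ℝ => bernoulliKernel a (t + y * I) := by
    unfold bernoulliKernel
    fun_prop
  exact meas.aestronglyMeasurable

lemma integrable_bernoulliKernel (h₀ : 0 < a.re) (h₁ : a.re < 1) (hy : y ∈ Set.Ioo 0 (2 * π)) :
    Integrable fun t : ℝ => bernoulliKernel a (t + y * I) :=
  ((integrable_exp_mul_div_one_add_exp h₀ h₁).const_mul _).mono'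
    (aestronglyMeasurable_bernoulliKernel a y) (ae_of_all _ (norm_bernoulliKernel_le a hy))

lemma integral_bernoulliKernel_eq_of_mem_Ioo (h₀ : 0 < a.re) (h₁ : a.re < 1) {y₁ y₂ : ℝ}
    (hy₁ : y₁ ∈ Set.Ioo 0 (2 * π)) (hy₂ : y₂ ∈ Set.Ioo 0 (2 * π)) :
    ∫ t : ℝ, bernoulliKernel a (t + y₁ * I) = ∫ t : ℝ, bernoulliKernel a (t + y₂ * I) := by
  have hsub : Set.uIcc y₁ y₂ ⊆ Set.Ioo 0 (2 * π) :=
    Set.OrdConnected.uIcc_subset Set.ordConnected_Ioo hy₁ hy₂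
  have hcont : ContinuousOn (fun y : ℝ => rexp (-(a.im * y)) / Real.sin (y / 2))
      (Set.uIcc y₁ y₂) :=
    ContinuousOn.div (by fun_prop) (by fun_prop) fun y hy => (sin_half_pos (hsub hy)).ne'
  obtain ⟨C, hC⟩ := isCompact_uIcc.bddAbove_image hcont
  refine integral_horizontal_line_eq_of_norm_le
    ((differentiableOn_bernoulliKernel a).mono (Set.preimage_mono hsub)) (fun t y hy => ?_)
    (by simpa using (tendsto_exp_mul_div_one_add_exp_cocompact h₀ h₁).const_mul C)
    (integrable_bernoulliKernel h₀ h₁ hy₁) (integrable_bernoulliKernel h₀ h₁ hy₂)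
  refine (norm_bernoulliKernel_le a (hsub hy) t).trans ?_
  gcongr
  exact hC ⟨y, hy, rfl⟩

lemma bernoulliKernel_add_pi_mul_I (a w : ℂ) :
    bernoulliKernel a (w + π * I) = -cexp (π * I * a) * (cexp (a * w) / (1 + cexp w)) := by
  have hnum : cexp (a * (w + π * I)) = cexp (π * I * a) * cexp (a * w) := by
    rw [← Complex.exp_add]; ring_nf
  have hden : cexp (w + π * I) - 1 = -(1 + cexp w) := by
    rw [Complex.exp_add, Complex.exp_pi_mul_I]; ring
  rw [bernoulliKernel, hnum, hden, div_neg, neg_mul, mul_div_assoc]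

lemma one_sub_cexp_two_pi_I_mul (a : ℂ) :
    1 - cexp (2 * π * I * a) = -2 * I * cexp (π * I * a) * Complex.sin (π * a) := by
  have hsq : cexp (2 * π * I * a) = cexp (π * I * a) * cexp (π * I * a) := by
    rw [← Complex.exp_add]; ring_nf
  have hinv : cexp (π * I * a) * cexp (-(π * I * a)) = 1 := by
    rw [← Complex.exp_add, add_neg_cancel, Complex.exp_zero]
  rw [Complex.sin, show -((π : ℂ) * a) * I = -(π * I * a) by ring,
    show (π : ℂ) * a * I = π * I * a by ring, hsq]
  linear_combination -hinv + (cexp (π * I * a) * (cexp (-(π * I * a)) - cexp (π * I * a))) * I_sq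

lemma one_sub_cexp_two_pi_I_mul_ne_zero (h₀ : 0 < a.re) (h₁ : a.re < 1) :
    1 - cexp (2 * π * I * a) ≠ 0 := by
  intro h
  obtain ⟨n, hn⟩ := Complex.exp_eq_one_iff.1 (sub_eq_zero.1 h).symm
  have han : a = n := mul_left_cancel₀ two_pi_I_ne_zero (hn.trans (mul_comm _ _))
  rw [han, intCast_re] at h₀ h₁
  norm_cast at h₀ h₁
  lia

lemma integral_bernoulliKernel (h₀ : 0 < a.re) (h₁ : a.re < 1) (hy : y ∈ Set.Ioo 0 (2 * π)) :
    ∫ t : ℝ, bernoulliKernel a (t + y * I) =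
      2 * π * I * cexp (2 * π * I * a) / (1 - cexp (2 * π * I * a)) := by
  have hpi : π ∈ Set.Ioo 0 (2 * π) := ⟨Real.pi_pos, by linarith [Real.pi_pos]⟩
  have hne := one_sub_cexp_two_pi_I_mul_ne_zero h₀ h₁
  have hfactor := one_sub_cexp_two_pi_I_mul a
  have hsin : Complex.sin (π * a) ≠ 0 := right_ne_zero_of_mul (hfactor ▸ hne)
  have hsq : cexp (2 * π * I * a) = cexp (π * I * a) * cexp (π * I * a) := by
    rw [← Complex.exp_add]; ring_nf
  rw [integral_bernoulliKernel_eq_of_mem_Ioo h₀ h₁ hy hpi]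
  simp only [bernoulliKernel_add_pi_mul_I]
  rw [integral_const_mul, integral_cexp_mul_div_one_add_cexp h₀ h₁, eq_div_iff hne, hfactor, hsq]
  field_simp

end BernoulliKernel

section DilogKernel

variable {a : ℂ} {y : ℝ}

lemma le_norm_add_mul_I (t y : ℝ) : y ≤ ‖(t + y * I : ℂ)‖ := by
  simpa using (le_abs_self _).trans (abs_im_le_norm (t + y * I : ℂ))

lemma norm_bernoulliKernel_div_le (a : ℂ) (hy : y ∈ Set.Ioo 0 (2 * π)) (t : ℝ) :
    ‖bernoulliKernel a (t + y * I) / (t + y * I)‖ ≤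
      rexp (-(a.im * y)) / Real.sin (y / 2) * (rexp (a.re * t) / (1 + rexp t)) / y := by
  have hy₀ : 0 < y := hy.1
  have hsin := sin_half_pos hy
  rw [norm_div]
  gcongr
  exacts [norm_bernoulliKernel_le a hy t, le_norm_add_mul_I t y]

lemma aestronglyMeasurable_bernoulliKernel_div (a : ℂ) (y : ℝ) :
    AEStronglyMeasurable fun t : ℝ => bernoulliKernel a (t + y * I) / (t + y * I) := by
  have meas : Measurable fun t : ℝ => (t + y * I : ℂ) := by fun_prop
  exact (aestronglyMeasurable_bernoulliKernel a y).div₀ meas.aestronglyMeasurable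

lemma integrable_bernoulliKernel_div (h₀ : 0 < a.re) (h₁ : a.re < 1)
    (hy : y ∈ Set.Ioo 0 (2 * π)) :
    Integrable fun t : ℝ => bernoulliKernel a (t + y * I) / (t + y * I) :=
  (((integrable_exp_mul_div_one_add_exp h₀ h₁).const_mul _).div_const y).mono'
    (aestronglyMeasurable_bernoulliKernel_div a y)
    (ae_of_all _ (norm_bernoulliKernel_div_le a hy))

lemma hasDerivAt_bernoulliKernel_div (a : ℂ) {w : ℂ} (hw : w ≠ 0) :
    HasDerivAt (fun a => bernoulliKernel a w / w) (bernoulliKernel a w) a := by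
  have h : HasDerivAt (fun a => cexp (a * w)) (cexp (a * w) * w) a := by
    simpa using ((hasDerivAt_id a).mul_const w).cexp
  refine ((h.div_const (cexp w - 1)).div_const w).congr_deriv ?_
  rw [bernoulliKernel, mul_div_right_comm, mul_div_cancel_right₀ _ hw]

lemma norm_bernoulliKernel_le_of_mem_box {α₁ α₂ β : ℝ}
    (ha : a ∈ Set.Ioo α₁ α₂ ×ℂ Set.Ioi β) (hy : y ∈ Set.Ioo 0 (2 * π)) (t : ℝ) :
    ‖bernoulliKernel a (t + y * I)‖ ≤ rexp (-(β * y)) / Real.sin (y / 2) *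
      (rexp (α₁ * t) / (1 + rexp t) + rexp (α₂ * t) / (1 + rexp t)) := by
  obtain ⟨⟨hα₁, hα₂⟩, hβ : β < a.im⟩ := ha
  have hy₀ : 0 < y := hy.1
  have hsin := sin_half_pos hy
  have hexp : rexp (a.re * t) ≤ rexp (α₁ * t) + rexp (α₂ * t) := by
    rcases le_total t 0 with ht | ht
    · have := Real.exp_le_exp.2 (mul_le_mul_of_nonpos_right hα₁.le ht)
      linarith [Real.exp_pos (α₂ * t)]
    · have := Real.exp_le_exp.2 (mul_le_mul_of_nonneg_right hα₂.le ht)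
      linarith [Real.exp_pos (α₁ * t)]
  rw [← add_div]
  exact (norm_bernoulliKernel_le a hy t).trans (by gcongr)

lemma hasDerivAt_integral_bernoulliKernel_div (h₀ : 0 < a.re) (h₁ : a.re < 1)
    (hy : y ∈ Set.Ioo 0 (2 * π)) :
    HasDerivAt (fun a => ∫ t : ℝ, bernoulliKernel a (t + y * I) / (t + y * I))
      (∫ t : ℝ, bernoulliKernel a (t + y * I)) a := by
  have box_mem : Set.Ioo (a.re / 2) ((a.re + 1) / 2) ×ℂ Set.Ioi (a.im - 1) ∈ 𝓝 a :=
    (isOpen_Ioo.reProdIm isOpen_Ioi).mem_nhds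
      ⟨⟨by linarith, by linarith⟩, show a.im - 1 < a.im by linarith⟩
  have hw (t : ℝ) : (t + y * I : ℂ) ≠ 0 := norm_pos_iff.1 (hy.1.trans_le (le_norm_add_mul_I t y))
  exact (hasDerivAt_integral_of_dominated_loc_of_deriv_le box_mem
    (.of_forall fun a => aestronglyMeasurable_bernoulliKernel_div a y)
    (integrable_bernoulliKernel_div h₀ h₁ hy) (aestronglyMeasurable_bernoulliKernel a y)
    (ae_of_all _ fun t _ ha => norm_bernoulliKernel_le_of_mem_box ha hy t)
    (((integrable_exp_mul_div_one_add_exp (by linarith) (by linarith)).add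
      (integrable_exp_mul_div_one_add_exp (by linarith) (by linarith))).const_mul _)
    (ae_of_all _ fun t a _ => hasDerivAt_bernoulliKernel_div a (hw t))).2

lemma tendsto_integral_bernoulliKernel_div_add_mul_I (h₀ : 0 < a.re) (h₁ : a.re < 1)
    (hy : y ∈ Set.Ioo 0 (2 * π)) :
    Tendsto (fun s : ℝ => ∫ t : ℝ, bernoulliKernel (a + s * I) (t + y * I) / (t + y * I)) atTop
      (𝓝 0) := by
  have hdecay : Tendsto (fun s : ℝ => rexp (-((a.im + s) * y))) atTop (𝓝 0) :=
    Real.tendsto_exp_neg_atTop_nhds_zero.comp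
      ((tendsto_atTop_add_const_left _ _ tendsto_id).atTop_mul_const hy.1)
  have hbound (s : ℝ) : ‖∫ t : ℝ, bernoulliKernel (a + s * I) (t + y * I) / (t + y * I)‖ ≤
      ∫ t : ℝ, rexp (-((a.im + s) * y)) / Real.sin (y / 2) *
        (rexp (a.re * t) / (1 + rexp t)) / y :=
    norm_integral_le_of_norm_le
      (((integrable_exp_mul_div_one_add_exp h₀ h₁).const_mul _).div_const y)
      (ae_of_all _ fun t => by simpa using norm_bernoulliKernel_div_le (a + s * I) hy t)
  simp only [integral_div, integral_const_mul] at hbound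
  refine squeeze_zero_norm hbound ?_
  simpa using ((hdecay.div_const (Real.sin (y / 2))).mul_const
    (∫ t : ℝ, rexp (a.re * t) / (1 + rexp t))).div_const y

lemma hasDerivAt_exp_integral_bernoulliKernel_div_mul (h₀ : 0 < a.re) (h₁ : a.re < 1)
    (hy : y ∈ Set.Ioo 0 (2 * π)) :
    HasDerivAt (fun a => cexp (∫ t : ℝ, bernoulliKernel a (t + y * I) / (t + y * I)) *
      (1 - cexp (2 * π * I * a))) 0 a := by
  have hlin : HasDerivAt (fun a : ℂ => 2 * π * I * a) (2 * π * I) a := by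
    simpa using (hasDerivAt_id a).const_mul (2 * π * I)
  refine ((hasDerivAt_integral_bernoulliKernel_div h₀ h₁ hy).cexp.mul
    (hlin.cexp.const_sub 1)).congr_deriv ?_
  have hne := one_sub_cexp_two_pi_I_mul_ne_zero h₀ h₁
  rw [integral_bernoulliKernel h₀ h₁ hy, mul_assoc, div_mul_cancel₀ _ hne]
  ring

theorem exp_integral_bernoulliKernel_div_mul_one_sub (h₀ : 0 < a.re) (h₁ : a.re < 1)
    (hy : y ∈ Set.Ioo 0 (2 * π)) :
    cexp (∫ t : ℝ, bernoulliKernel a (t + y * I) / (t + y * I)) *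
      (1 - cexp (2 * π * I * a)) = 1 := by
  set F : ℂ → ℂ := fun a => cexp (∫ t : ℝ, bernoulliKernel a (t + y * I) / (t + y * I)) *
    (1 - cexp (2 * π * I * a))
  have hderiv (s : ℝ) : HasDerivAt (fun s : ℝ => F (a + s * I)) 0 s := by
    have hline : HasDerivAt (fun s : ℝ => a + s * I) I s := by
      simpa using ((hasDerivAt_id s).ofReal_comp.mul_const I).const_add a
    exact ((hasDerivAt_exp_integral_bernoulliKernel_div_mul (a := a + s * I) (by simpa)
      (by simpa) hy).comp s hline).congr_deriv (zero_mul I)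
  have hconst (s : ℝ) : F a = F (a + s * I) := by
    simpa using is_const_of_deriv_eq_zero (fun s => (hderiv s).differentiableAt)
      (fun s => (hderiv s).deriv) 0 s
  have hexp : Tendsto (fun s : ℝ => cexp (2 * π * I * (a + s * I))) atTop (𝓝 0) := by
    rw [Complex.tendsto_exp_nhds_zero_iff]
    have hre (s : ℝ) : (2 * π * I * (a + s * I)).re = -(2 * π * (a.im + s)) := by simp
    simp only [hre]
    exact tendsto_neg_atTop_atBot.comp
      ((tendsto_atTop_add_const_left _ _ tendsto_id).const_mul_atTop Real.two_pi_pos)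
  have hlim : Tendsto (fun s : ℝ => F (a + s * I)) atTop (𝓝 1) := by
    simpa using (tendsto_integral_bernoulliKernel_div_add_mul_I h₀ h₁ hy).cexp.mul
      (hexp.const_sub 1)
  exact tendsto_nhds_unique (tendsto_const_nhds.congr hconst) hlim

end DilogKernel

section Integrand

variable {b ε : ℝ}

lemma sin_pos_of_lt_pi_mul_min (hb : 0 < b) (hε₀ : 0 < ε) (hε : ε < π * min b b⁻¹) :
    0 < Real.sin (b * ε) ∧ 0 < Real.sin (b⁻¹ * ε) := by
  have hεb : ε < b⁻¹ * π := by
    linarith [mul_le_mul_of_nonneg_left (min_le_right b b⁻¹) Real.pi_nonneg]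
  have hεb' : ε < b * π := by
    linarith [mul_le_mul_of_nonneg_left (min_le_left b b⁻¹) Real.pi_nonneg]
  exact ⟨Real.sin_pos_of_pos_of_lt_pi (by positivity) ((lt_inv_mul_iff₀ hb).1 hεb),
    Real.sin_pos_of_pos_of_lt_pi (by positivity) ((inv_mul_lt_iff₀ hb).2 hεb')⟩

lemma sin_mul_cosh_le_norm_sinh_mul {c ε : ℝ} (t : ℝ) :
    Real.sin (c * ε) * Real.cosh (c * t) ≤ ‖Complex.sinh (c * (t + I * ε))‖ := by
  refine le_trans ?_ (abs_sin_mul_cosh_le_norm_sinh _)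
  have hre : (c * (t + I * ε) : ℂ).re = c * t := by simp
  have him : (c * (t + I * ε) : ℂ).im = c * ε := by simp
  rw [hre, him]
  gcongr
  exact le_abs_self _

lemma norm_ebIntegrand_le (hb : 0 < b) (hε₀ : 0 < ε) (hε : ε < π * min b b⁻¹) (z : ℂ) (t : ℝ) :
    ‖ebIntegrand b ε z t‖ ≤
      rexp (2 * z.re * ε) / (ε * Real.sin (b * ε) * Real.sin (b⁻¹ * ε)) *
        (rexp (2 * z.im * t) / (Real.cosh (b * t) * Real.cosh (b⁻¹ * t))) := by
  obtain ⟨hsin, hsin'⟩ := sin_pos_of_lt_pi_mul_min hb hε₀ hε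
  have hnum : ‖cexp (-2 * I * z * (t + I * ε))‖ = rexp (2 * z.re * ε) * rexp (2 * z.im * t) := by
    rw [Complex.norm_exp, ← Real.exp_add]
    congr 1
    simp
  have hlin : ε ≤ ‖(t + I * ε : ℂ)‖ := by simpa only [mul_comm I] using le_norm_add_mul_I t ε
  have hsinh := sin_mul_cosh_le_norm_sinh_mul (c := b) (ε := ε) t
  have hsinh' := sin_mul_cosh_le_norm_sinh_mul (c := b⁻¹) (ε := ε) t
  rw [ofReal_inv] at hsinh'
  rw [ebIntegrand, norm_div, norm_mul, norm_mul, hnum, div_mul_div_comm]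
  refine div_le_div_of_nonneg_left (by positivity) (by positivity) ?_
  calc ε * Real.sin (b * ε) * Real.sin (b⁻¹ * ε) * (Real.cosh (b * t) * Real.cosh (b⁻¹ * t))
      = ε * (Real.sin (b * ε) * Real.cosh (b * t)) *
          (Real.sin (b⁻¹ * ε) * Real.cosh (b⁻¹ * t)) := by ring
    _ ≤ _ := by gcongr

lemma exp_le_two_mul_cosh (x : ℝ) : rexp x ≤ 2 * Real.cosh x := by
  rw [Real.cosh_eq]
  linarith [Real.exp_pos (-x)]

lemma inv_cosh_mul_cosh_le (c d t : ℝ) :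
    (Real.cosh (c * t) * Real.cosh (d * t))⁻¹ ≤ 4 * rexp (-(c + d) * t) := by
  rw [inv_le_comm₀ (by positivity) (by positivity), mul_inv, ← Real.exp_neg,
    show -(-(c + d) * t) = c * t + d * t by ring, Real.exp_add]
  calc 4⁻¹ * (rexp (c * t) * rexp (d * t))
      ≤ 4⁻¹ * ((2 * Real.cosh (c * t)) * (2 * Real.cosh (d * t))) := by
        gcongr <;> exact exp_le_two_mul_cosh _
    _ = Real.cosh (c * t) * Real.cosh (d * t) := by ring

lemma integrable_exp_div_cosh_mul_cosh {c d η : ℝ} (hη : |η| < c + d) :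
    Integrable fun t : ℝ => rexp (η * t) / (Real.cosh (c * t) * Real.cosh (d * t)) := by
  obtain ⟨hη₁, hη₂⟩ := abs_lt.1 hη
  have hnorm (t : ℝ) : ‖rexp (η * t) / (Real.cosh (c * t) * Real.cosh (d * t))‖ =
      rexp (η * t) * (Real.cosh (c * t) * Real.cosh (d * t))⁻¹ := by
    rw [Real.norm_of_nonneg (by positivity), div_eq_mul_inv]
  have hbound (c d t : ℝ) : rexp (η * t) * (Real.cosh (c * t) * Real.cosh (d * t))⁻¹ ≤
      4 * rexp ((η - (c + d)) * t) := by
    calc _ ≤ rexp (η * t) * (4 * rexp (-(c + d) * t)) := by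
          gcongr
          exact inv_cosh_mul_cosh_le c d t
      _ = 4 * rexp ((η - (c + d)) * t) := by
          rw [mul_left_comm, ← Real.exp_add]
          ring_nf
  have hcont : Continuous fun t : ℝ => rexp (η * t) / (Real.cosh (c * t) * Real.cosh (d * t)) := by
    have hne (t : ℝ) : Real.cosh (c * t) * Real.cosh (d * t) ≠ 0 := by positivity
    fun_prop (disch := exact hne _)
  refine integrable_of_norm_le_mul_exp (C := 4) (p := η + (c + d)) (q := η - (c + d))
    hcont.aestronglyMeasurable (by linarith) (by linarith) (fun t => ?_) (fun t => ?_)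
  · rw [hnorm, ← Real.cosh_neg (c * t), ← Real.cosh_neg (d * t), ← neg_mul, ← neg_mul]
    convert hbound (-c) (-d) t using 4
    ring
  · rw [hnorm]
    exact hbound c d t

lemma im_cb (b : ℝ) : (cb b).im = (b + b⁻¹) / 2 := by
  rw [cb, ← ofReal_inv, ← ofReal_add]
  simp [-ofReal_inv, -ofReal_add]

theorem integrable_ebIntegrand (hb : 0 < b) (hε₀ : 0 < ε) (hε : ε < π * min b b⁻¹) {z : ℂ}
    (hz : |z.im| < (cb b).im) : Integrable (ebIntegrand b ε z) := by
  rw [im_cb] at hz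
  have hη : |2 * z.im| < b + b⁻¹ := by
    rw [abs_mul, abs_two]
    linarith
  have hmeas : Measurable (ebIntegrand b ε z) := by
    unfold ebIntegrand
    fun_prop
  exact ((integrable_exp_div_cosh_mul_cosh hη).const_mul _).mono' hmeas.aestronglyMeasurable
    (ae_of_all _ (norm_ebIntegrand_le hb hε₀ hε z))

lemma sinh_mul_ne_zero {c : ℝ} (hsin : 0 < Real.sin (c * ε)) (t : ℝ) :
    Complex.sinh (c * (t + I * ε)) ≠ 0 :=
  norm_pos_iff.1 ((mul_pos hsin (Real.cosh_pos _)).trans_le (sin_mul_cosh_le_norm_sinh_mul t))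

lemma ebIntegrand_sub_ebIntegrand (hb : b ≠ 0) (hsin : 0 < Real.sin (b * ε)) (z : ℂ) (t : ℝ) :
    ebIntegrand b ε (z - I * b / 2) t - ebIntegrand b ε (z + I * b / 2) t =
      -(8 / b) * (bernoulliKernel (1 / 2 - I * b * z) (2 / b * (t + I * ε)) /
        (2 / b * (t + I * ε))) := by
  have hbC : (b : ℂ) ≠ 0 := ofReal_ne_zero.2 hb
  have hsinh := sinh_mul_ne_zero hsin t
  rw [ebIntegrand, ebIntegrand, bernoulliKernel, cexp_sub_one_eq]
  set u : ℂ := t + I * ε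
  have hhalf : 2 / b * u / 2 = (b : ℂ)⁻¹ * u := by ring
  have hnum : cexp (-2 * I * (z - I * b / 2) * u) - cexp (-2 * I * (z + I * b / 2) * u) =
      -2 * cexp (-2 * I * z * u) * Complex.sinh (b * u) := by
    rw [show -2 * I * (z - I * b / 2) * u = -2 * I * z * u + -(b * u) by
        linear_combination b * u * I_sq,
      show -2 * I * (z + I * b / 2) * u = -2 * I * z * u + b * u by
        linear_combination -(b * u * I_sq),
      Complex.exp_add, Complex.exp_add, Complex.sinh]
    ring
  have hexp : cexp ((1 / 2 - I * b * z) * (2 / b * u)) =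
      cexp (-2 * I * z * u) * cexp ((b : ℂ)⁻¹ * u) := by
    rw [← Complex.exp_add]
    congr 1
    field_simp
    ring
  rw [← sub_div, hnum, hexp, hhalf, mul_right_comm u, mul_div_mul_right _ _ hsinh]
  field_simp
  norm_num

lemma integral_ebIntegrand_sub_integral_ebIntegrand (hb : 0 < b) (hε₀ : 0 < ε)
    (hε : ε < π * min b b⁻¹) {z : ℂ} (hz : |z.im| < 1 / (2 * b)) :
    (∫ t : ℝ, ebIntegrand b ε (z - I * b / 2) t) - (∫ t : ℝ, ebIntegrand b ε (z + I * b / 2) t) =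
      -4 * ∫ t : ℝ, bernoulliKernel (1 / 2 - I * b * z) (t + (2 / b * ε : ℝ) * I) /
        (t + (2 / b * ε : ℝ) * I) := by
  obtain ⟨hz₁, hz₂⟩ := abs_lt.1 hz
  have hcb : (cb b).im = b / 2 + 1 / (2 * b) := by
    rw [im_cb]
    ring
  have hminus : |(z - I * b / 2).im| < (cb b).im := by
    have him : (z - I * b / 2).im = z.im - b / 2 := by simp
    rw [him, hcb, abs_lt]
    constructor <;> linarith
  have hplus : |(z + I * b / 2).im| < (cb b).im := by
    have him : (z + I * b / 2).im = z.im + b / 2 := by simp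
    rw [him, hcb, abs_lt]
    constructor <;> linarith
  have hbC : (b : ℂ) ≠ 0 := ofReal_ne_zero.2 hb.ne'
  set G : ℝ → ℂ := fun t => bernoulliKernel (1 / 2 - I * b * z) (t + (2 / b * ε : ℝ) * I) /
    (t + (2 / b * ε : ℝ) * I)
  have hdiff (t : ℝ) : ebIntegrand b ε (z - I * b / 2) t - ebIntegrand b ε (z + I * b / 2) t =
      -(8 / b) * G (2 / b * t) := by
    rw [ebIntegrand_sub_ebIntegrand hb.ne' (sin_pos_of_lt_pi_mul_min hb hε₀ hε).1]
    simp only [G]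
    congr <;> (push_cast; ring)
  rw [← integral_sub (integrable_ebIntegrand hb hε₀ hε hminus)
    (integrable_ebIntegrand hb hε₀ hε hplus)]
  simp only [hdiff]
  rw [integral_const_mul, Measure.integral_comp_mul_left, abs_of_pos (by positivity), real_smul]
  push_cast
  field_simp
  ring

end Integrand

theorem statement2_general (b ε : ℝ) (hb : 0 < b) (hε₀ : 0 < ε) (hε : ε < π * min b b⁻¹) (z : ℂ)
    (hz : |z.im| < 1 / (2 * b)) :
    ebE b ε (z - I * b / 2) = (1 + cexp (2 * π * b * z)) * ebE b ε (z + I * b / 2) := by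
  have hy : 2 / b * ε ∈ Set.Ioo 0 (2 * π) := by
    have hεb : ε < π * b := hε.trans_le (by gcongr; exact min_le_left _ _)
    exact ⟨by positivity, by rw [div_mul_eq_mul_div, div_lt_iff₀ hb]; linarith⟩
  have hbz : |b * z.im| < 1 / 2 := by
    rwa [abs_mul, abs_of_pos hb, ← lt_div_iff₀' hb, div_div]
  obtain ⟨hbz₁, hbz₂⟩ := abs_lt.1 hbz
  have hre : (1 / 2 - I * b * z).re = 1 / 2 + b * z.im := by simp
  have hfactor : 1 - cexp (2 * π * I * (1 / 2 - I * b * z)) = 1 + cexp (2 * π * b * z) := by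
    rw [show 2 * π * I * (1 / 2 - I * b * z) = π * I + 2 * π * b * z by
      linear_combination -(2 * π * b * z) * I_sq, Complex.exp_add, Complex.exp_pi_mul_I]
    ring
  have hexp := exp_integral_bernoulliKernel_div_mul_one_sub (a := 1 / 2 - I * b * z)
    (by linarith) (by linarith) hy
  rw [hfactor] at hexp
  rw [ebE, ebE, sub_eq_iff_eq_add.1 (integral_ebIntegrand_sub_integral_ebIntegrand hb hε₀ hε hz),
    eq_inv_of_mul_eq_one_right hexp, ← Complex.exp_neg, ← Complex.exp_add]
  ring_nf

/-- the `b`-shift equation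
`e_b(z − ib/2) = (1 + e^{2πbz})·e_b(z + ib/2)` on the strip `|Im z| < 1/(2b)`. -/
theorem statement2 (b : ℝ) (hb : 0 < b) (z : ℂ) (hz : |z.im| < 1 / (2 * b)) :
    eb b (z - Complex.I * (b : ℂ) / 2) =
      (1 + Complex.exp (2 * (π : ℂ) * (b : ℂ) * z)) * eb b (z + Complex.I * (b : ℂ) / 2) := by
  have hpos : 0 < π * min b b⁻¹ := by positivity
  exact statement2_general b _ hb (half_pos hpos) (half_lt_self hpos) z hz

end
end
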